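/- Let M and S be the symmetric (N−1)×(N−1) mass and stiffness matrices, I the identity, κ a real constant, and define A = M⊗S + S⊗M + 2I⊗I + κ(I⊗M + M⊗I) and à = M⊗M^{−1} + M^{−1}⊗M + 2I⊗I + κ(I⊗M + M⊗I). Then the eigenspace of Ã^{−1}A for the eigenvalue 1 has dimension at least (N−3)², i.e., the solution space of A·vec(U) = Ã·vec(U) has dimension at least (N−3)². -/

import Mathlib

/-!
With `W = S - M⁻¹`, the difference `A - Ã` is `M ⊗ W + W ⊗ M`. Let `Q` consist of the first `N - 3`
columns of the invertible matrix `M`. Then `W Q` consists of the first `N - 3` columns of `S M - I`;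
if these vanish, the `(N - 3)²` linearly independent columns of `Q ⊗ Q` lie in the kernel.

They vanish because `ψ_{m+1}` is an antiderivative of `φ_m` that is zero at `±1`, and because for
`m ≤ N - 3` it is itself the derivative of a polynomial `q` of degree less than `N`. In the
Fourier–Legendre expansion `q' = ∑ ⟨φ_k, q⟩ φ_k'` the constant `φ_0` is lost, so `1 ≤ k < N`
suffices, and `⟨φ_k, q⟩ = -⟨ψ_{k+1}, ψ_{m+1}⟩` is an entry of column `m` of `M`. Pairing with `φ_i'`
and integrating by parts gives column `m` of `S M`.
-/

open Polynomial

/-- The Legendre polynomial of degree `n` (Rodrigues formula). -/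
noncomputable def legendre (n : ℕ) : Polynomial ℝ :=
  C ((1 : ℝ) / (2 ^ n * n.factorial)) * derivative^[n] ((X ^ 2 - 1) ^ n)

/-- `ψ_{m+1}(ξ) = (1/√(2(2m+1))) (L_{m+1}(ξ) − L_{m−1}(ξ))`. -/
noncomputable def psiF (m : ℕ) (x : ℝ) : ℝ :=
  (Real.sqrt (2 * (2 * (m : ℝ) + 1)))⁻¹ *
    ((legendre (m + 1)).eval x - (legendre (m - 1)).eval x)

/-- The normalized Legendre function `φ_m(ξ) = √((2m+1)/2) L_m(ξ)`. -/
noncomputable def phiF (m : ℕ) (x : ℝ) : ℝ :=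
  Real.sqrt ((2 * (m : ℝ) + 1) / 2) * (legendre m).eval x

/-- The `(N−1)×(N−1)` mass matrix `M_{mn} = ∫ ψ_{n+1} ψ_{m+1}`,
with index `i : Fin (N−1)` corresponding to `m = i + 1`. -/
noncomputable def massMatrix (N : ℕ) : Matrix (Fin (N - 1)) (Fin (N - 1)) ℝ :=
  Matrix.of fun i j => ∫ x in (-1 : ℝ)..1, psiF ((j : ℕ) + 1) x * psiF ((i : ℕ) + 1) x

/-- The `(N−1)×(N−1)` stiffness matrix `S_{mn} = ∫ φ_n' φ_m'`. -/
noncomputable def stiffMatrix (N : ℕ) : Matrix (Fin (N - 1)) (Fin (N - 1)) ℝ :=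
  Matrix.of fun i j =>
    ∫ x in (-1 : ℝ)..1, deriv (phiF ((j : ℕ) + 1)) x * deriv (phiF ((i : ℕ) + 1)) x

open scoped Kronecker

/-- `A = M⊗S + S⊗M + 2 I⊗I + κ(I⊗M + M⊗I)` (the 2D divergence-free spectral matrix). -/
noncomputable def matA (N : ℕ) (κ : ℝ) :
    Matrix (Fin (N - 1) × Fin (N - 1)) (Fin (N - 1) × Fin (N - 1)) ℝ :=
  massMatrix N ⊗ₖ stiffMatrix N + stiffMatrix N ⊗ₖ massMatrix N +
    2 • ((1 : Matrix (Fin (N - 1)) (Fin (N - 1)) ℝ) ⊗ₖ 1) +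
    κ • ((1 : Matrix (Fin (N - 1)) (Fin (N - 1)) ℝ) ⊗ₖ massMatrix N +
      massMatrix N ⊗ₖ 1)

/-- `Ã = M⊗M⁻¹ + M⁻¹⊗M + 2 I⊗I + κ(I⊗M + M⊗I)` (the auxiliary preconditioner). -/
noncomputable def matAtilde (N : ℕ) (κ : ℝ) :
    Matrix (Fin (N - 1) × Fin (N - 1)) (Fin (N - 1) × Fin (N - 1)) ℝ :=
  massMatrix N ⊗ₖ (massMatrix N)⁻¹ + (massMatrix N)⁻¹ ⊗ₖ massMatrix N +
    2 • ((1 : Matrix (Fin (N - 1)) (Fin (N - 1)) ℝ) ⊗ₖ 1) +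
    κ • ((1 : Matrix (Fin (N - 1)) (Fin (N - 1)) ℝ) ⊗ₖ massMatrix N +
      massMatrix N ⊗ₖ 1)

section LinearAlgebra

variable {K l m n V : Type*} [Field K]

lemma card_le_finrank_ker_of_mul_eq_zero [Fintype m] [DecidableEq m] [Fintype n] [DecidableEq n]
    {A : Matrix l n K} {Q : Matrix n m K} {L : Matrix m n K} (hAQ : A * Q = 0) (hLQ : L * Q = 1) :
    Fintype.card m ≤ Module.finrank K (LinearMap.ker A.toLin') := by
  have hinj : Function.Injective Q.toLin' := by
    refine Function.LeftInverse.injective (g := L.toLin') fun v => ?_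
    rw [← Matrix.toLin'_mul_apply, hLQ, Matrix.toLin'_one, LinearMap.id_apply]
  have hle : LinearMap.range Q.toLin' ≤ LinearMap.ker A.toLin' := by
    rw [LinearMap.range_le_ker_iff, ← Matrix.toLin'_mul, hAQ, map_zero]
  calc Fintype.card m = Module.finrank K (LinearMap.range Q.toLin') := by
        rw [LinearMap.finrank_range_of_inj hinj, Module.finrank_fintype_fun_eq_card]
    _ ≤ Module.finrank K (LinearMap.ker A.toLin') := Submodule.finrank_mono hle

lemma sq_card_le_finrank_ker_kronecker_add [Fintype m] [DecidableEq m] [Fintype n] [DecidableEq n]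
    (M M' : Matrix n n K) {W : Matrix n n K} {Q : Matrix n m K} {L : Matrix m n K}
    (hWQ : W * Q = 0) (hLQ : L * Q = 1) :
    Fintype.card m ^ 2 ≤
      Module.finrank K (LinearMap.ker (Matrix.toLin' (M ⊗ₖ W + W ⊗ₖ M'))) := by
  rw [sq, ← Fintype.card_prod]
  apply card_le_finrank_ker_of_mul_eq_zero (Q := Q ⊗ₖ Q) (L := L ⊗ₖ L)
  · rw [Matrix.add_mul, ← Matrix.mul_kronecker_mul, ← Matrix.mul_kronecker_mul, hWQ,
      Matrix.kronecker_zero, Matrix.zero_kronecker, add_zero]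
  · rw [← Matrix.mul_kronecker_mul, hLQ, Matrix.one_kronecker_one]

lemma isUnit_gram_of_linearIndependent [Fintype n] [DecidableEq n] [AddCommGroup V] [Module K V]
    {B : LinearMap.BilinForm K V} (hB : ∀ x, B x x = 0 → x = 0) {v : n → V}
    (hv : LinearIndependent K v) : IsUnit (Matrix.of fun i j => B (v j) (v i)) := by
  rw [← Matrix.mulVec_injective_iff_isUnit, ← Matrix.coe_mulVecLin, injective_iff_map_eq_zero]
  intro c hc
  have hBv (i : n) : B (∑ j, c j • v j) (v i) = 0 := by
    simpa [Matrix.mulVec, dotProduct, mul_comm] using congrFun hc i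
  have hsum : ∑ j, c j • v j = 0 := hB _ <| by
    rw [map_sum (B _)]
    exact Finset.sum_eq_zero fun i _ => by rw [map_smul, hBv, smul_zero]
  exact funext (Fintype.linearIndependent_iff.1 hv c hsum)

lemma sum_smul_eq_of_mem_span_orthonormal {R ι : Type*} [CommRing R] [AddCommGroup V] [Module R V]
    [DecidableEq ι] {B : LinearMap.BilinForm R V} {v : ι → V}
    (hv : ∀ i j, B (v i) (v j) = if i = j then 1 else 0) {s : Finset ι} {x : V}
    (hx : x ∈ Submodule.span R (v '' s)) : ∑ i ∈ s, B (v i) x • v i = x := by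
  induction hx using Submodule.span_induction with
  | mem x hx =>
    obtain ⟨j, hj, rfl⟩ := hx
    simpa [hv] using fun h => absurd (Finset.mem_coe.1 hj) h
  | zero => simp
  | add x y _ _ hx hy => simp only [map_add, add_smul, Finset.sum_add_distrib, hx, hy]
  | smul c x _ hx => simp only [map_smul, smul_assoc, ← Finset.smul_sum, hx]

end LinearAlgebra

section Derivative

lemma exists_derivative_eq {K : Type*} [DivisionRing K] [CharZero K] (p : K[X]) :
    ∃ q : K[X], derivative q = p := by
  induction p using Polynomial.induction_on' with
  | add p₁ p₂ h₁ h₂ =>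
    obtain ⟨q₁, rfl⟩ := h₁
    obtain ⟨q₂, rfl⟩ := h₂
    exact ⟨q₁ + q₂, derivative_add⟩
  | monomial n a =>
    refine ⟨monomial (n + 1) (a / (n + 1 : ℕ)), ?_⟩
    rw [derivative_monomial_succ, ← Nat.cast_succ,
      div_mul_cancel₀ _ (Nat.cast_ne_zero.2 n.succ_ne_zero)]

lemma natDegree_iterate_derivative_eq {R : Type*} [Semiring R] [IsAddTorsionFree R] (p : R[X])
    (k : ℕ) : (derivative^[k] p).natDegree = p.natDegree - k := by
  induction k with
  | zero => rfl
  | succ k ih => rw [Function.iterate_succ_apply', natDegree_derivative, ih, Nat.sub_sub]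

variable {R : Type*} [CommRing R]

lemma degree_X_mul_derivative_sub_C_mul_lt {p : R[X]} {n : ℕ} (hp : p.natDegree ≤ n) :
    degree (X * derivative p - C (n : R) * p) < n := by
  rw [degree_lt_iff_coeff_zero]
  intro k hk
  have hcoeff : (X * derivative p - C (n : R) * p).coeff k = (k - n) * p.coeff k := by
    rcases k with _ | k
    · simp
    · rw [coeff_sub, coeff_X_mul, coeff_derivative, coeff_C_mul]
      push_cast
      ring
  rcases hk.eq_or_lt with rfl | hlt
  · rw [hcoeff, sub_self, zero_mul]
  · rw [hcoeff, coeff_eq_zero_of_natDegree_lt (hp.trans_lt hlt), mul_zero]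

lemma eval_iterate_derivative_pow_eq_zero {w : R[X]} {x : R} (hw : w.eval x = 0) {k n : ℕ}
    (hk : k < n) : (derivative^[k] (w ^ n)).eval x = 0 := by
  obtain ⟨r, hr⟩ := pow_sub_dvd_iterate_derivative_pow w n k
  rw [hr, eval_mul, eval_pow, hw, zero_pow (Nat.sub_ne_zero_of_lt hk), zero_mul]

lemma iterate_two_derivative_X_sq_sub_one_pow (n : ℕ) :
    derivative^[2] ((X ^ 2 - 1 : R[X]) ^ (n + 2)) =
      C (2 * (n + 2) * (2 * n + 3) : R) * (X ^ 2 - 1) ^ (n + 1) +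
        C (4 * (n + 1) * (n + 2) : R) * (X ^ 2 - 1) ^ n := by
  have hw : derivative (X ^ 2 - 1 : R[X]) = C 2 * X := by
    rw [derivative_sub, derivative_X_sq, derivative_one, sub_zero]
  rw [Function.iterate_succ_apply, Function.iterate_one, derivative_pow_succ, hw, mul_assoc,
    derivative_C_mul, derivative_mul, derivative_pow_succ, hw, derivative_C_mul, derivative_X]
  simp only [map_add, map_mul, map_natCast, map_ofNat, map_one]
  push_cast
  ring

end Derivative

section L2Form

/-- The `L²(a, b)` form `⟨p, q⟩ = ∫ p q` on real polynomials. The endpoints are not ordered, so the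
form is positive definite only for `a < b`. -/
noncomputable def l2Form (a b : ℝ) : LinearMap.BilinForm ℝ ℝ[X] :=
  LinearMap.mk₂ ℝ (fun p q => ∫ x in a..b, p.eval x * q.eval x)
    (fun p₁ p₂ q => by
      simp only [eval_add, add_mul]
      exact intervalIntegral.integral_add (Continuous.intervalIntegrable (by fun_prop) a b)
        (Continuous.intervalIntegrable (by fun_prop) a b))
    (fun c p q => by simp [mul_assoc])
    (fun p q₁ q₂ => by
      simp only [eval_add, mul_add]
      exact intervalIntegral.integral_add (Continuous.intervalIntegrable (by fun_prop) a b)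
        (Continuous.intervalIntegrable (by fun_prop) a b))
    (fun c p q => by simp [mul_left_comm])

variable {a b : ℝ}

lemma l2Form_apply (p q : ℝ[X]) : l2Form a b p q = ∫ x in a..b, p.eval x * q.eval x := rfl

lemma l2Form_comm (p q : ℝ[X]) : l2Form a b p q = l2Form a b q p := by
  simp only [l2Form_apply, mul_comm]

lemma l2Form_mul_left (p q r : ℝ[X]) : l2Form a b (p * q) r = l2Form a b p (q * r) := by
  simp only [l2Form_apply, eval_mul, mul_assoc]

lemma l2Form_C_mul_left (c : ℝ) (p q : ℝ[X]) : l2Form a b (C c * p) q = c * l2Form a b p q := by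
  rw [← smul_eq_C_mul, map_smul, LinearMap.smul_apply, smul_eq_mul]

lemma l2Form_C_mul_right (c : ℝ) (p q : ℝ[X]) : l2Form a b p (C c * q) = c * l2Form a b p q := by
  rw [← smul_eq_C_mul, map_smul, smul_eq_mul]

lemma l2Form_derivative_left (p q : ℝ[X]) : l2Form a b (derivative p) q =
    p.eval b * q.eval b - p.eval a * q.eval a - l2Form a b p (derivative q) := by
  rw [l2Form_comm, l2Form_comm p]
  simpa only [l2Form_apply, mul_comm] using
    intervalIntegral.integral_mul_deriv_eq_deriv_mul (fun x _ => q.hasDerivAt x)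
      (fun x _ => p.hasDerivAt x) ((derivative q).continuous.intervalIntegrable a b)
      ((derivative p).continuous.intervalIntegrable a b)

lemma l2Form_iterate_derivative_left {p : ℝ[X]} {k : ℕ}
    (ha : ∀ i < k, (derivative^[i] p).eval a = 0) (hb : ∀ i < k, (derivative^[i] p).eval b = 0)
    (q : ℝ[X]) :
    l2Form a b (derivative^[k] p) q = (-1) ^ k * l2Form a b p (derivative^[k] q) := by
  induction k generalizing q with
  | zero => simp
  | succ k ih =>
    rw [Function.iterate_succ_apply', l2Form_derivative_left, ha k k.lt_succ_self,
      hb k k.lt_succ_self, ih (fun i hi => ha i (hi.trans k.lt_succ_self))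
        (fun i hi => hb i (hi.trans k.lt_succ_self)), ← Function.iterate_succ_apply, pow_succ]
    ring

lemma eq_zero_of_l2Form_self_eq_zero (hab : a < b) {p : ℝ[X]} (hp : l2Form a b p p = 0) :
    p = 0 := by
  have hroot : ∀ x ∈ Set.Icc a b, p.IsRoot x := by
    intro x hx
    by_contra hne
    refine (intervalIntegral.integral_pos hab (p.continuous.mul p.continuous).continuousOn
      (fun y _ => mul_self_nonneg _) ⟨x, hx, mul_self_pos.2 hne⟩).ne' hp
  exact eq_zero_of_infinite_isRoot p ((Set.Icc_infinite hab).mono hroot)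

end L2Form

section Legendre

lemma legendre_zero : legendre 0 = 1 := by simp [legendre]

lemma legendre_one : legendre 1 = X := by
  rw [legendre, pow_one, Function.iterate_one, pow_one, derivative_sub, derivative_X_sq,
    derivative_one, sub_zero, ← mul_assoc, ← C_mul]
  norm_num

lemma natDegree_legendre (n : ℕ) : (legendre n).natDegree = n := by
  rw [legendre, natDegree_C_mul (by positivity), natDegree_iterate_derivative_eq, natDegree_pow,
    ← C_1, natDegree_X_pow_sub_C]
  lia

lemma legendre_add_two_sub (n : ℕ) : legendre (n + 2) - legendre n =
    C ((2 * n + 3 : ℝ) / (2 ^ (n + 1) * (n + 1).factorial)) *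
      derivative^[n] ((X ^ 2 - 1) ^ (n + 1)) := by
  have hsucc : (1 : ℝ) / (2 ^ (n + 2) * (n + 2).factorial) * (2 * (n + 2) * (2 * n + 3)) =
      (2 * n + 3) / (2 ^ (n + 1) * (n + 1).factorial) := by
    rw [Nat.factorial_succ (n + 1)]
    push_cast
    field_simp
    ring
  have hself : (1 : ℝ) / (2 ^ (n + 2) * (n + 2).factorial) * (4 * (n + 1) * (n + 2)) =
      1 / (2 ^ n * n.factorial) := by
    rw [Nat.factorial_succ, Nat.factorial_succ]
    push_cast
    field_simp
    ring
  rw [legendre, legendre, Function.iterate_add_apply, iterate_two_derivative_X_sq_sub_one_pow,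
    iterate_map_add, iterate_derivative_C_mul, iterate_derivative_C_mul, mul_add, ← mul_assoc,
    ← mul_assoc, ← C_mul, ← C_mul, hsucc, hself, add_sub_cancel_right]

lemma derivative_legendre_add_two_sub (n : ℕ) :
    derivative (legendre (n + 2) - legendre n) = C (2 * n + 3 : ℝ) * legendre (n + 1) := by
  rw [legendre_add_two_sub, derivative_C_mul, ← Function.iterate_succ_apply' derivative, legendre,
    ← mul_assoc, ← C_mul, mul_one_div]

-- For `n = 0` truncated subtraction gives the usual convention `L_{-1} = L_0`.
lemma derivative_legendre_succ_sub_pred (n : ℕ) :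
    derivative (legendre (n + 1) - legendre (n - 1)) = C (2 * n + 1 : ℝ) * legendre n := by
  rcases n with _ | n
  · simp [legendre_zero, legendre_one]
  · rw [Nat.add_sub_cancel, derivative_legendre_add_two_sub]
    push_cast
    ring_nf

lemma eval_legendre_add_two {x : ℝ} (hx : x ^ 2 = 1) (n : ℕ) :
    (legendre (n + 2)).eval x = (legendre n).eval x := by
  rw [← sub_eq_zero, ← eval_sub, legendre_add_two_sub, eval_mul,
    eval_iterate_derivative_pow_eq_zero (by simp [hx]) n.lt_succ_self, mul_zero]

lemma eval_legendre_of_sq_eq_one {x : ℝ} (hx : x ^ 2 = 1) (n : ℕ) :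
    (legendre n).eval x = x ^ n := by
  induction n using Nat.twoStepInduction with
  | zero => simp [legendre_zero]
  | one => simp [legendre_one]
  | more n h _ => rw [eval_legendre_add_two hx, h, pow_add, hx, mul_one]

lemma legendre_ne_zero (n : ℕ) : legendre n ≠ 0 := by
  intro h
  simpa [h] using eval_legendre_of_sq_eq_one (one_pow 2) n

lemma degree_legendre (n : ℕ) : (legendre n).degree = n := by
  rw [degree_eq_natDegree (legendre_ne_zero n), natDegree_legendre]

lemma l2Form_legendre_eq_zero_of_degree_lt {n : ℕ} {q : ℝ[X]} (hq : q.degree < n) :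
    l2Form (-1) 1 (legendre n) q = 0 := by
  have hvanish {x : ℝ} (hx : x ^ 2 = 1) :
      ∀ k < n, (derivative^[k] ((X ^ 2 - 1 : ℝ[X]) ^ n)).eval x = 0 :=
    fun k hk => eval_iterate_derivative_pow_eq_zero (by simp [hx]) hk
  have hderiv : derivative^[n] q = 0 := by
    rcases eq_or_ne q 0 with rfl | h0
    · exact iterate_map_zero derivative n
    · exact iterate_derivative_eq_zero ((natDegree_lt_iff_degree_lt h0).2 hq)
  rw [legendre, l2Form_C_mul_left, l2Form_iterate_derivative_left (hvanish (by norm_num))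
    (hvanish (by norm_num)), hderiv, map_zero, mul_zero, mul_zero]

lemma l2Form_legendre_of_ne {m n : ℕ} (h : m ≠ n) :
    l2Form (-1) 1 (legendre m) (legendre n) = 0 := by
  wlog hlt : n < m generalizing m n
  · rw [l2Form_comm]
    exact this h.symm (h.lt_or_gt.resolve_right hlt)
  · exact l2Form_legendre_eq_zero_of_degree_lt (by rw [degree_legendre]; exact_mod_cast hlt)

-- Integrate `(X L²)' = L² + 2 L (X L')`, where `X L'` is `n L` up to terms of lower degree.
lemma l2Form_legendre_self (n : ℕ) :
    l2Form (-1) 1 (legendre n) (legendre n) = 2 / (2 * n + 1) := by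
  set L := legendre n with hL
  have hsq {x : ℝ} (hx : x ^ 2 = 1) : L.eval x * L.eval x = 1 := by
    rw [hL, eval_legendre_of_sq_eq_one hx, ← mul_pow, ← sq, hx, one_pow]
  have hmul : l2Form (-1) 1 L (X * derivative L) = n * l2Form (-1) 1 L L := by
    rw [← l2Form_C_mul_right, ← sub_eq_zero, ← map_sub]
    exact l2Form_legendre_eq_zero_of_degree_lt
      (degree_X_mul_derivative_sub_C_mul_lt (natDegree_legendre n).le)
  have hparts := l2Form_derivative_left (a := -1) (b := 1) (X * L) L
  rw [derivative_mul, derivative_X, one_mul, map_add, LinearMap.add_apply, l2Form_comm (X * _),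
    mul_comm X L, l2Form_mul_left, hmul] at hparts
  simp only [eval_mul, eval_X, mul_right_comm _ _ (eval _ L), hsq, one_pow, neg_sq] at hparts
  rw [eq_div_iff (by positivity)]
  linarith

end Legendre

section NormalizedLegendre

/-- The polynomial whose evaluation is `phiF m`: the normalized Legendre polynomial `φ_m`. -/
noncomputable def phiPoly (m : ℕ) : ℝ[X] := C (√((2 * (m : ℝ) + 1) / 2)) * legendre m

/-- The polynomial whose evaluation is `psiF m`: the function `ψ_{m+1}` of the paper, which is the
antiderivative of `φ_m` vanishing at `±1` when `m ≥ 1`. -/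
noncomputable def psiPoly (m : ℕ) : ℝ[X] :=
  C (√(2 * (2 * (m : ℝ) + 1)))⁻¹ * (legendre (m + 1) - legendre (m - 1))

lemma phiF_eq_eval (m : ℕ) : phiF m = fun x => (phiPoly m).eval x := by
  ext x
  simp [phiF, phiPoly]

lemma psiF_eq_eval (m : ℕ) : psiF m = fun x => (psiPoly m).eval x := by
  ext x
  simp [psiF, psiPoly]

lemma derivative_psiPoly (m : ℕ) : derivative (psiPoly m) = phiPoly m := by
  have hcoeff : (√(2 * (2 * (m : ℝ) + 1)))⁻¹ * (2 * m + 1) = √((2 * m + 1) / 2) := by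
    rw [inv_mul_eq_iff_eq_mul₀ (by positivity), ← Real.sqrt_mul (by positivity), eq_comm,
      Real.sqrt_eq_iff_mul_self_eq (by positivity) (by positivity)]
    ring
  rw [psiPoly, derivative_C_mul, derivative_legendre_succ_sub_pred, ← mul_assoc, ← C_mul, hcoeff,
    phiPoly]

lemma eval_psiPoly_succ {x : ℝ} (hx : x ^ 2 = 1) (m : ℕ) : (psiPoly (m + 1)).eval x = 0 := by
  rw [psiPoly, eval_mul, eval_sub, Nat.add_sub_cancel, eval_legendre_add_two hx, sub_self, mul_zero]

lemma natDegree_psiPoly_le (m : ℕ) : (psiPoly m).natDegree ≤ m + 1 := by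
  refine (natDegree_C_mul_le _ _).trans ((natDegree_sub_le _ _).trans ?_)
  rw [natDegree_legendre, natDegree_legendre]
  lia

lemma l2Form_phiPoly (m n : ℕ) :
    l2Form (-1) 1 (phiPoly m) (phiPoly n) = if m = n then 1 else 0 := by
  rw [phiPoly, phiPoly, l2Form_C_mul_left, l2Form_C_mul_right]
  split_ifs with h
  · rw [h, l2Form_legendre_self, ← mul_assoc, Real.mul_self_sqrt (by positivity)]
    field_simp
  · rw [l2Form_legendre_of_ne h, mul_zero, mul_zero]

/-- The sequence `φ_0, φ_1, …`, bundled with the fact that `φ_m` has degree `m`. -/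
noncomputable def phiSequence : Polynomial.Sequence ℝ where
  elems' := phiPoly
  degree_eq' m := by rw [phiPoly, degree_C_mul (by positivity), degree_legendre]

lemma linearIndependent_psiPoly : LinearIndependent ℝ psiPoly := by
  refine LinearIndependent.of_comp derivative ?_
  rw [show ⇑derivative ∘ psiPoly = phiPoly from funext derivative_psiPoly]
  exact phiSequence.linearIndependent

lemma sum_l2Form_smul_phiPoly {q : ℝ[X]} {n : ℕ} (hq : q.degree < n) :
    ∑ k ∈ Finset.range n, l2Form (-1) 1 (phiPoly k) q • phiPoly k = q := by
  refine sum_smul_eq_of_mem_span_orthonormal l2Form_phiPoly ?_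
  have hspan : Submodule.span ℝ (phiPoly '' Set.Iio n) = degreeLT ℝ n :=
    phiSequence.span_degreeLT fun i _ => (leadingCoeff_ne_zero.2 (phiSequence.ne_zero i)).isUnit
  rwa [Finset.coe_range, hspan, mem_degreeLT]

lemma sum_l2Form_smul_derivative_phiPoly {q : ℝ[X]} {n : ℕ} (hq : q.natDegree ≤ n) :
    ∑ k ∈ Finset.range n, l2Form (-1) 1 (phiPoly (k + 1)) q • derivative (phiPoly (k + 1)) =
      derivative q := by
  have hphi : derivative (phiPoly 0) = 0 := by simp [phiPoly, legendre_zero]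
  have hdeg : q.degree < (n + 1 : ℕ) :=
    degree_le_natDegree.trans_lt (by exact_mod_cast Nat.lt_succ_of_le hq)
  conv_rhs => rw [← sum_l2Form_smul_phiPoly hdeg]
  rw [derivative_sum, Finset.sum_range_succ']
  simp only [derivative_smul, hphi, smul_zero, add_zero]

lemma l2Form_psiPoly_succ_derivative (m : ℕ) (q : ℝ[X]) :
    l2Form (-1) 1 (psiPoly (m + 1)) (derivative q) = -l2Form (-1) 1 (phiPoly (m + 1)) q := by
  have hparts := l2Form_derivative_left (a := -1) (b := 1) (psiPoly (m + 1)) q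
  rw [derivative_psiPoly, eval_psiPoly_succ (by norm_num), eval_psiPoly_succ (by norm_num)]
    at hparts
  linarith

end NormalizedLegendre

section Matrices

variable {N : ℕ}

lemma massMatrix_apply (i j : Fin (N - 1)) :
    massMatrix N i j = l2Form (-1) 1 (psiPoly (j + 1)) (psiPoly (i + 1)) := by
  simp [massMatrix, l2Form_apply, psiF_eq_eval]

lemma stiffMatrix_apply (i j : Fin (N - 1)) : stiffMatrix N i j =
    l2Form (-1) 1 (derivative (phiPoly (j + 1))) (derivative (phiPoly (i + 1))) := by
  simp [stiffMatrix, l2Form_apply, phiF_eq_eval]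

lemma isUnit_massMatrix (N : ℕ) : IsUnit (massMatrix N) := by
  have hgram : massMatrix N = Matrix.of fun i j : Fin (N - 1) =>
      l2Form (-1) 1 (psiPoly (j + 1)) (psiPoly (i + 1)) :=
    Matrix.ext massMatrix_apply
  rw [hgram]
  exact isUnit_gram_of_linearIndependent
    (fun _ => eq_zero_of_l2Form_self_eq_zero (by norm_num))
    (linearIndependent_psiPoly.comp (fun i : Fin (N - 1) => (i : ℕ) + 1)
      ((add_left_injective 1).comp Fin.val_injective))

lemma stiffMatrix_mul_massMatrix_apply {i j : Fin (N - 1)} (hj : (j : ℕ) < N - 3) :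
    (stiffMatrix N * massMatrix N) i j = (1 : Matrix _ _ ℝ) i j := by
  obtain ⟨q, hq⟩ := exists_derivative_eq (psiPoly (j + 1))
  have hdeg : q.natDegree ≤ N - 1 := by
    have hψ := natDegree_psiPoly_le (j + 1)
    rw [← hq, natDegree_derivative] at hψ
    lia
  have hmass (k : Fin (N - 1)) : massMatrix N k j = -l2Form (-1) 1 (phiPoly (k + 1)) q := by
    rw [massMatrix_apply, l2Form_comm, ← hq, l2Form_psiPoly_succ_derivative]
  have hexpand : ∑ k : Fin (N - 1),
      l2Form (-1) 1 (phiPoly (k + 1)) q • derivative (phiPoly (k + 1)) = psiPoly (j + 1) := by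
    rw [← hq, ← sum_l2Form_smul_derivative_phiPoly hdeg, Finset.sum_range]
  calc (stiffMatrix N * massMatrix N) i j
      = -l2Form (-1) 1 (psiPoly (j + 1)) (derivative (phiPoly (i + 1))) := by
        rw [Matrix.mul_apply, ← hexpand, map_sum, LinearMap.sum_apply, ← Finset.sum_neg_distrib]
        refine Finset.sum_congr rfl fun k _ => ?_
        rw [stiffMatrix_apply, hmass, map_smul, LinearMap.smul_apply, smul_eq_mul]
        ring
    _ = l2Form (-1) 1 (phiPoly (j + 1)) (phiPoly (i + 1)) := by
        rw [l2Form_psiPoly_succ_derivative, neg_neg]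
    _ = (1 : Matrix _ _ ℝ) i j := by
        simp only [l2Form_phiPoly, Matrix.one_apply, add_left_inj, Fin.val_inj, eq_comm]

lemma matA_sub_matAtilde (N : ℕ) (κ : ℝ) : matA N κ - matAtilde N κ =
    massMatrix N ⊗ₖ (stiffMatrix N - (massMatrix N)⁻¹) +
      (stiffMatrix N - (massMatrix N)⁻¹) ⊗ₖ massMatrix N := by
  ext ⟨i, i'⟩ ⟨j, j'⟩
  simp only [matA, matAtilde, Matrix.sub_apply, Matrix.add_apply, Matrix.smul_apply,
    Matrix.kronecker_apply]
  ring

end Matrices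

/-- The solution space of `A·vec(U) = Ã·vec(U)`, i.e. the eigenspace of `Ã⁻¹A` for the
eigenvalue `1`, has dimension at least `(N−3)²`. -/
theorem eigenspace_one_dim_ge (N : ℕ) (hN : 4 ≤ N) (κ : ℝ) :
    (N - 3) ^ 2 ≤
      Module.finrank ℝ ↥(LinearMap.ker (Matrix.toLin' (matA N κ - matAtilde N κ))) := by
  have hdet : IsUnit (massMatrix N).det := (Matrix.isUnit_iff_isUnit_det _).1 (isUnit_massMatrix N)
  let e : Fin (N - 3) → Fin (N - 1) := Fin.castLE (by lia)
  let Q := (massMatrix N).submatrix id e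
  have hWQ : (stiffMatrix N - (massMatrix N)⁻¹) * Q = 0 := by
    rw [← Matrix.submatrix_id_id (_ - _), ← Matrix.submatrix_mul _ _ _ _ _ Function.bijective_id,
      Matrix.sub_mul, Matrix.nonsing_inv_mul _ hdet]
    ext i j
    exact sub_eq_zero.2 (stiffMatrix_mul_massMatrix_apply j.2)
  have hLQ : (massMatrix N)⁻¹.submatrix e id * Q = 1 := by
    rw [← Matrix.submatrix_mul _ _ _ _ _ Function.bijective_id, Matrix.nonsing_inv_mul _ hdet,
      Matrix.submatrix_one _ (Fin.castLE_injective _)]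
  rw [matA_sub_matAtilde]
  simpa using sq_card_le_finrank_ker_kronecker_add (massMatrix N) (massMatrix N) hWQ hLQ
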